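/- The kernel of D is the internal direct sum of the image of D and the free rank-2 P-submodule P·(1, 0) ⊕ P·(ξ₁, 0): ker D = im D ⊕ (P·(1,0) ⊕ P·(ξ₁,0)). (Consequently the homology of the differential graded algebra Q for h > 2 is a free k[τ]-module of rank 2, spanned by the classes of 1 and ξ₁; i.e., H_*(Q) ≅ k[τ] ⊗ Λ(ξ).) -/

import Mathlib

/-!
Put `n = h - 2` and write `ξ_{n+1} g` for the pair `(0, g)`. Every element of `V` is then a
combination of `1` and of left multiples `ξ_i x` with `1 ≤ i ≤ n + 1` and `x ∈ R'`, and for all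
these `i` alike `D (ξ_i x) = ∑_{j+k=i} ξ_j ξ_k x - ξ_i (d x)`: up to the summand `P · 1` and a
shift of indices this is the acyclic twisted complex `C ⊗ Ω C` over a cobar construction.

The contracting homotopy is the linear map `S` with `S (ξ₁ ξ_k x) = ξ_{k+1} x` that kills `1`,
`ξ₁` and `ξ_i x` for `i ≥ 2`. It satisfies `S D + D S = id - π` (`homotopy`), where `π` projects
onto the span of `1` and `ξ₁`. The coefficients of `1` and `ξ₁` are read off by the algebra
homomorphism `coef` from `R'` to the dual numbers sending `ξ₁` to `ε` and the other generators
to `0`; it annihilates the image of `d` and the element `μ`, so `π D = 0`. This yields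
`ker D ⊆ im D + span`, the disjointness and the linear independence.

The remaining fact `D² = 0` also follows from the homotopy: `π D = D π = 0` forces `S` to commute
with `D²`, and `ξ_{i+1} x = S (ξ₁ ξ_i x)` together with `D² (ξ₁ y) = ξ₁ (d² y)` allows an
induction on `i` (`D_D_X`).
-/

/- `R' k h = FreeAlgebra (k[τ]) (Fin (h-2))` models the free algebra over
`P = k[τ]` on noncommuting generators `ξ₁, …, ξ_{h−2}`; the generator of index
`a : Fin (h-2)` represents `ξ_{a+1}`. -/

/-- The free algebra `R′` over `P = k[τ]` on `ξ₁, …, ξ_{h−2}`. -/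
abbrev Ralg (k : Type*) [Field k] (h : ℕ) : Type _ :=
  FreeAlgebra (Polynomial k) (Fin (h - 2))

/-- The element `d(ξ_{a+1}) = Σ_{j+k=a+1, j,k≥1} ξ_j ξ_k` of `R′`
(with `ξ_j = ι ⟨j-1⟩`). -/
noncomputable def dgen (k : Type*) [Field k] (h : ℕ) (a : Fin (h - 2)) : Ralg k h :=
  ∑ p ∈ Finset.univ.filter
      (fun p : Fin (h - 2) × Fin (h - 2) => p.1.val + p.2.val + 2 = a.val + 1),
    FreeAlgebra.ι (Polynomial k) p.1 * FreeAlgebra.ι (Polynomial k) p.2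

/-- The basis word of `R′` corresponding to a list of generator indices. -/
noncomputable def word (k : Type*) [Field k] (h : ℕ) (w : List (Fin (h - 2))) :
    Ralg k h :=
  (w.map (FreeAlgebra.ι (Polynomial k))).prod

/-- The prescribed value of the differential `d` on a basis word of `R′`. -/
noncomputable def dWord (k : Type*) [Field k] (h : ℕ) :
    List (Fin (h - 2)) → Ralg k h
  | [] => 0
  | a :: w => dgen k h a * word k h w - FreeAlgebra.ι (Polynomial k) a * dWord k h w

/-- The element `μ = Σ_{j+k=h−1, j,k≥1} ξ_j ξ_k` of `R′`. -/
noncomputable def muElt (k : Type*) [Field k] (h : ℕ) : Ralg k h :=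
  ∑ p ∈ Finset.univ.filter
      (fun p : Fin (h - 2) × Fin (h - 2) => p.1.val + p.2.val + 2 = h - 1),
    FreeAlgebra.ι (Polynomial k) p.1 * FreeAlgebra.ι (Polynomial k) p.2

/-! ### Generators, the homotopy and the coefficient map -/

/-- The generator `ξ_{i+1}` of `R'`, with the index a natural number; zero if `i ≥ h - 2`. -/
noncomputable def gen (k : Type*) [Field k] (h : ℕ) (i : ℕ) : Ralg k h :=
  if hi : i < h - 2 then FreeAlgebra.ι (Polynomial k) ⟨i, hi⟩ else 0

/-- The quadratic element `∑_{j+l=i+1} ξ_j ξ_l`, as a sum over a range. It is `d ξ_{i+1}` for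
`i < h - 2` and `μ` for `i = h - 2`. -/
noncomputable def quad (k : Type*) [Field k] (h : ℕ) (i : ℕ) : Ralg k h :=
  ∑ j ∈ Finset.range i, gen k h j * gen k h (i - 1 - j)

/-- The element `ξ_{i+1} x` of `V`; meaningful for `i ≤ h - 2`, where `ξ_{h-1} x` is the
pair `(0, x)`. -/
noncomputable def X (k : Type*) [Field k] (h : ℕ) (i : ℕ) :
    Ralg k h →ₗ[Polynomial k] Ralg k h × Ralg k h :=
  if i < h - 2 then
    LinearMap.inl (Polynomial k) (Ralg k h) (Ralg k h) ∘ₗ LinearMap.mulLeft _ (gen k h i)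
  else LinearMap.inr (Polynomial k) (Ralg k h) (Ralg k h)

/-- The values of the contracting homotopy on words: `ξ₁ ξ_{b+1} w ↦ ξ_{b+2} w`, and zero on all
other words. -/
noncomputable def sWord (k : Type*) [Field k] (h : ℕ) :
    List (Fin (h - 2)) → Ralg k h × Ralg k h
  | a :: b :: w => if a.val = 0 then X k h (b.val + 1) (word k h w) else 0
  | _ => 0

/-- The contracting homotopy, as a map on the first summand of `V`; on the second summand
`ξ_{h-1} R'` it is zero. -/
noncomputable def S (k : Type*) [Field k] (h : ℕ) :
    Ralg k h →ₗ[Polynomial k] Ralg k h × Ralg k h :=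
  (FreeAlgebra.basisFreeMonoid (Polynomial k) (Fin (h - 2))).constr (Polynomial k)
    (fun w => sWord k h w.toList)

/-- The algebra homomorphism to the dual numbers with `ξ₁ ↦ ε` and `ξ_i ↦ 0` for `i ≥ 2`. Its two
components are the coefficients of the words `1` and `ξ₁`. -/
noncomputable def coef (k : Type*) [Field k] (h : ℕ) :
    Ralg k h →ₐ[Polynomial k] DualNumber (Polynomial k) :=
  FreeAlgebra.lift (Polynomial k) (fun a => if a.val = 0 then DualNumber.eps else 0)

section

variable {k : Type*} [Field k] {h : ℕ}

/-! ### Evaluation on words and on left multiples of generators -/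

lemma basis_eq_word (w : List (Fin (h - 2))) :
    FreeAlgebra.basisFreeMonoid (Polynomial k) (Fin (h - 2)) (FreeMonoid.ofList w)
      = word k h w := by
  simp [FreeAlgebra.basisFreeMonoid, FreeAlgebra.equivMonoidAlgebraFreeMonoid, word,
    FreeMonoid.lift_apply]

lemma word_nil : word k h [] = 1 := rfl

lemma word_cons (a : Fin (h - 2)) (w : List (Fin (h - 2))) :
    word k h (a :: w) = gen k h a.val * word k h w := by
  simp [word, gen]

/-- The words span `R'`, so linear maps agreeing on words are equal. -/
lemma word_ext {M : Type*} [AddCommGroup M] [Module (Polynomial k) M]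
    {f g : Ralg k h →ₗ[Polynomial k] M} (H : ∀ w, f (word k h w) = g (word k h w)) : f = g := by
  refine (FreeAlgebra.basisFreeMonoid (Polynomial k) (Fin (h - 2))).ext fun w => ?_
  have := H w.toList
  rwa [← basis_eq_word] at this

lemma S_word (w : List (Fin (h - 2))) : S k h (word k h w) = sWord k h w := by
  rw [← basis_eq_word, S, Module.Basis.constr_basis]
  rfl

lemma X_lt {i : ℕ} (hi : i < h - 2) (x : Ralg k h) : X k h i x = (gen k h i * x, 0) := by
  simp [X, hi]

lemma X_top (x : Ralg k h) : X k h (h - 2) x = (0, x) := by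
  simp [X]

lemma S_gen_zero_mul {i : ℕ} (hi : i < h - 2) (x : Ralg k h) :
    S k h (gen k h 0 * (gen k h i * x)) = X k h (i + 1) x := by
  have h0 : 0 < h - 2 := by omega
  have : S k h ∘ₗ LinearMap.mulLeft _ (gen k h 0) ∘ₗ LinearMap.mulLeft _ (gen k h i)
      = X k h (i + 1) := word_ext fun w => by
    have := S_word (k := k) (⟨0, h0⟩ :: ⟨i, hi⟩ :: w)
    simpa [word_cons, sWord] using this
  exact LinearMap.congr_fun this x

lemma S_gen_succ_mul (i : ℕ) (x : Ralg k h) : S k h (gen k h (i + 1) * x) = 0 := by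
  by_cases hi : i + 1 < h - 2
  · have : S k h ∘ₗ LinearMap.mulLeft _ (gen k h (i + 1)) = 0 := word_ext fun w => by
      have := S_word (k := k) (⟨i + 1, hi⟩ :: w)
      cases w <;> simpa [word_cons, sWord] using this
    exact LinearMap.congr_fun this x
  · simp [gen, hi]

lemma S_one : S k h 1 = 0 := S_word []

lemma S_gen_zero : S k h (gen k h 0) = 0 := by
  by_cases h0 : 0 < h - 2
  · simpa [word_cons, word_nil, sWord] using S_word (k := k) [⟨0, h0⟩]
  · simp [gen, h0]

lemma coef_gen_mul_gen (i j : ℕ) : coef k h (gen k h i) * coef k h (gen k h j) = 0 := by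
  unfold gen coef
  split_ifs <;> simp

lemma coef_gen_zero (hh : 3 ≤ h) : coef k h (gen k h 0) = DualNumber.eps := by
  simp [gen, coef, show 0 < h - 2 by omega]

lemma coef_gen_succ (i : ℕ) : coef k h (gen k h (i + 1)) = 0 := by
  unfold gen coef
  split_ifs <;> simp

lemma coef_quad (i : ℕ) : coef k h (quad k h i) = 0 := by
  simp [quad, coef_gen_mul_gen]

/-! ### The quadratic elements -/

/-- Splits off the term `ξ₁ ξ_{i+1}`. -/
lemma quad_succ (i : ℕ) : quad k h (i + 1) =
    ∑ j ∈ Finset.range i, gen k h (j + 1) * gen k h (i - 1 - j) + gen k h 0 * gen k h i := by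
  rw [quad, Finset.sum_range_succ']
  simp only [Nat.add_sub_cancel, Nat.sub_zero]
  congr 1
  refine Finset.sum_congr rfl fun j _ => ?_
  rw [show i - (j + 1) = i - 1 - j by omega]

lemma sum_filter_eq_quad {i : ℕ} (hi : i ≤ h - 2) :
    ∑ p ∈ Finset.univ.filter
      (fun p : Fin (h - 2) × Fin (h - 2) => p.1.val + p.2.val + 2 = i + 1),
    FreeAlgebra.ι (Polynomial k) p.1 * FreeAlgebra.ι (Polynomial k) p.2 = quad k h i := by
  refine Finset.sum_bij (fun p _ => p.1.val) ?_ ?_ ?_ ?_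
  · intro p hp
    simp at hp ⊢
    omega
  · intro p hp q hq hpq
    simp at hp hq hpq
    apply Prod.ext <;> apply Fin.ext <;> omega
  · intro j hj
    simp at hj
    exact ⟨(⟨j, by omega⟩, ⟨i - 1 - j, by omega⟩), by simp; omega, rfl⟩
  · intro p hp
    simp at hp
    have : i - 1 - p.1.val = p.2.val := by omega
    simp [gen, this]

lemma dgen_eq (a : Fin (h - 2)) : dgen k h a = quad k h a.val :=
  sum_filter_eq_quad a.isLt.le

lemma muElt_eq (hh : 3 ≤ h) : muElt k h = quad k h (h - 2) := by
  rw [← sum_filter_eq_quad le_rfl, muElt, show h - 2 + 1 = h - 1 by omega]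

lemma S_quad_mul {i : ℕ} (hi : i < h - 2) (x : Ralg k h) :
    S k h (quad k h (i + 1) * x) = X k h (i + 1) x := by
  simp [quad_succ, add_mul, Finset.sum_mul, mul_assoc, S_gen_succ_mul, S_gen_zero_mul hi]

/-- `S` shifts the left index of `ξ₁ (d ξ_{i+1}) x`, giving all terms of `(d ξ_{i+2}) x` but
`ξ₁ ξ_{i+1} x` (with `d ξ_{h-1} = μ`). -/
lemma S_gen_zero_mul_quad_mul {i : ℕ} (hi : i < h - 2) (x : Ralg k h) :
    S k h (gen k h 0 * (quad k h i * x)) =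
      (quad k h (i + 1) * x - gen k h 0 * (gen k h i * x), 0) := by
  have : ∀ j ∈ Finset.range i, S k h (gen k h 0 * (gen k h j * (gen k h (i - 1 - j) * x)))
      = (gen k h (j + 1) * (gen k h (i - 1 - j) * x), 0) := fun j hj => by
    have hj := Finset.mem_range.1 hj
    rw [S_gen_zero_mul (by omega), X_lt (by omega)]
  rw [quad_succ, quad]
  simp only [Finset.sum_mul, Finset.mul_sum, mul_assoc, map_sum]
  rw [Finset.sum_congr rfl this]
  ext <;> simp [Prod.fst_sum, Prod.snd_sum, add_mul, Finset.sum_mul, mul_assoc]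

/-! ### The differentials and the homotopy identity -/

lemma d_gen_mul {d : Ralg k h →ₗ[Polynomial k] Ralg k h}
    (hd : ∀ w : List (Fin (h - 2)), d (word k h w) = dWord k h w)
    {i : ℕ} (hi : i < h - 2) (x : Ralg k h) :
    d (gen k h i * x) = quad k h i * x - gen k h i * d x := by
  have : d ∘ₗ LinearMap.mulLeft _ (gen k h i)
      = LinearMap.mulLeft _ (quad k h i) - LinearMap.mulLeft _ (gen k h i) ∘ₗ d :=
    word_ext fun w => by
      have := hd (⟨i, hi⟩ :: w)
      simpa [word_cons, dWord, dgen_eq, hd w, gen, hi] using this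
  exact LinearMap.congr_fun this x

lemma d_one {d : Ralg k h →ₗ[Polynomial k] Ralg k h}
    (hd : ∀ w : List (Fin (h - 2)), d (word k h w) = dWord k h w) : d 1 = 0 := hd []

lemma d_gen_zero {d : Ralg k h →ₗ[Polynomial k] Ralg k h}
    (hd : ∀ w : List (Fin (h - 2)), d (word k h w) = dWord k h w) (hh : 3 ≤ h) :
    d (gen k h 0) = 0 := by
  simpa [quad, d_one hd] using d_gen_mul hd (show 0 < h - 2 by omega) 1

lemma coef_d {d : Ralg k h →ₗ[Polynomial k] Ralg k h}
    (hd : ∀ w : List (Fin (h - 2)), d (word k h w) = dWord k h w) (x : Ralg k h) :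
    coef k h (d x) = 0 := by
  have : (coef k h).toLinearMap ∘ₗ d = 0 := word_ext fun w => by
    induction w with
    | nil => simp [word_nil, d_one hd]
    | cons a w ih =>
      have ih : coef k h (d (word k h w)) = 0 := ih
      simp [word_cons, d_gen_mul hd a.isLt, coef_quad, ih]
  exact LinearMap.congr_fun this x

/-- The uniform formula `D (ξ_{i+1} x) = (d ξ_{i+1}) x - ξ_{i+1} (d x)`, including the generator
`ξ_{h-1}`, for which `d ξ_{h-1} = μ`. -/
lemma D_X {d : Ralg k h →ₗ[Polynomial k] Ralg k h}
    (hd : ∀ w : List (Fin (h - 2)), d (word k h w) = dWord k h w)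
    {D : Ralg k h × Ralg k h →ₗ[Polynomial k] Ralg k h × Ralg k h}
    (hD : ∀ f g : Ralg k h, D (f, g) = (d f + muElt k h * g, -d g))
    (hh : 3 ≤ h) {i : ℕ} (hi : i ≤ h - 2) (x : Ralg k h) :
    D (X k h i x) = (quad k h i * x, 0) - X k h i (d x) := by
  rcases hi.lt_or_eq with hi | rfl
  · simp [X_lt hi, hD, d_gen_mul hd hi]
  · simp [X_top, hD, muElt_eq hh]

/-- The projection of `V` onto the span of `1` and `ξ₁`, as a map on the first summand. -/
noncomputable def proj (k : Type*) [Field k] (h : ℕ) : Ralg k h →ₗ[Polynomial k] Ralg k h :=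
  ((LinearMap.fst (Polynomial k) (Polynomial k) (Polynomial k)) ∘ₗ
      (coef k h).toLinearMap).smulRight 1 +
    ((LinearMap.snd (Polynomial k) (Polynomial k) (Polynomial k)) ∘ₗ
      (coef k h).toLinearMap).smulRight (gen k h 0)

lemma proj_apply (x : Ralg k h) :
    proj k h x = (coef k h x).fst • 1 + (coef k h x).snd • gen k h 0 := rfl

/-- The homotopy identity `S D + D S = id - π`. -/
lemma homotopy {d : Ralg k h →ₗ[Polynomial k] Ralg k h}
    (hd : ∀ w : List (Fin (h - 2)), d (word k h w) = dWord k h w)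
    {D : Ralg k h × Ralg k h →ₗ[Polynomial k] Ralg k h × Ralg k h}
    (hD : ∀ f g : Ralg k h, D (f, g) = (d f + muElt k h * g, -d g))
    (hh : 3 ≤ h) (v : Ralg k h × Ralg k h) :
    S k h (D v).1 + D (S k h v.1) = v - (proj k h v.1, 0) := by
  have h0 : 0 < h - 2 := by omega
  obtain ⟨f, g⟩ := v
  have hg : S k h (muElt k h * g) = (0, g) := by
    have := S_quad_mul (k := k) (h := h) (i := h - 3) (by omega) g
    rwa [show h - 3 + 1 = h - 2 by omega, X_top, ← muElt_eq hh] at this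
  have hf : S k h (d f) + D (S k h f) = (f - proj k h f, 0) := by
    have : S k h ∘ₗ d + D ∘ₗ S k h = LinearMap.inl (Polynomial k) _ _ ∘ₗ (LinearMap.id - proj k h) :=
      word_ext fun w => by
        change S k h (d _) + D (S k h _) = (_ - proj k h _, 0)
        rcases w with _ | ⟨⟨_ | a, ha⟩, w⟩
        · simp [word_nil, d_one hd, S_one, proj_apply, ← Prod.zero_eq_mk]
        · rcases w with _ | ⟨⟨b, hb⟩, w⟩
          · simp [word_nil, word_cons, d_gen_zero hd hh, S_gen_zero, proj_apply, coef_gen_zero hh,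
              ← Prod.zero_eq_mk]
          · have hc : coef k h (gen k h 0 * (gen k h b * word k h w)) = 0 := by
              rw [← mul_assoc, map_mul, map_mul, coef_gen_mul_gen, zero_mul]
            simp only [word_cons]
            rw [S_gen_zero_mul hb, D_X hd hD hh (by omega), d_gen_mul hd ha, d_gen_mul hd hb,
              mul_sub, map_sub, map_sub, S_gen_zero_mul hb, S_gen_zero_mul_quad_mul hb]
            simp [quad, proj_apply, hc]
        · simp only [word_cons]
          rw [d_gen_mul hd ha, map_sub, S_gen_succ_mul, S_gen_succ_mul,
            S_quad_mul (by omega), X_lt ha]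
          simp [proj_apply, coef_gen_succ]
    exact LinearMap.congr_fun this f
  rw [hD, map_add, hg, add_right_comm, hf]
  simp

lemma coef_D {d : Ralg k h →ₗ[Polynomial k] Ralg k h}
    (hd : ∀ w : List (Fin (h - 2)), d (word k h w) = dWord k h w)
    {D : Ralg k h × Ralg k h →ₗ[Polynomial k] Ralg k h × Ralg k h}
    (hD : ∀ f g : Ralg k h, D (f, g) = (d f + muElt k h * g, -d g))
    (hh : 3 ≤ h) (v : Ralg k h × Ralg k h) : coef k h (D v).1 = 0 := by
  obtain ⟨f, g⟩ := v
  simp [hD, coef_d hd, muElt_eq hh, coef_quad]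

lemma D_proj {d : Ralg k h →ₗ[Polynomial k] Ralg k h}
    (hd : ∀ w : List (Fin (h - 2)), d (word k h w) = dWord k h w)
    {D : Ralg k h × Ralg k h →ₗ[Polynomial k] Ralg k h × Ralg k h}
    (hD : ∀ f g : Ralg k h, D (f, g) = (d f + muElt k h * g, -d g))
    (hh : 3 ≤ h) (x : Ralg k h) : D (proj k h x, 0) = 0 := by
  simp [hD, proj_apply, d_one hd, d_gen_zero hd hh]

/-! ### The square of the differential -/

/-- `S` commutes with `D²`, by composing the homotopy identity with `D` on either side. -/
lemma S_D_D {d : Ralg k h →ₗ[Polynomial k] Ralg k h}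
    (hd : ∀ w : List (Fin (h - 2)), d (word k h w) = dWord k h w)
    {D : Ralg k h × Ralg k h →ₗ[Polynomial k] Ralg k h × Ralg k h}
    (hD : ∀ f g : Ralg k h, D (f, g) = (d f + muElt k h * g, -d g))
    (hh : 3 ≤ h) (v : Ralg k h × Ralg k h) :
    D (D (S k h v.1)) = S k h (D (D v)).1 := by
  have h1 := homotopy hd hD hh (D v)
  have h2 := congrArg D (homotopy hd hD hh v)
  have h3 : proj k h (D v).1 = 0 := by simp [proj_apply, coef_D hd hD hh]
  rw [map_add, map_sub, D_proj hd hD hh, sub_zero] at h2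
  rw [h3, Prod.mk_zero_zero, sub_zero] at h1
  rw [add_comm] at h2
  exact add_right_cancel (h2.trans h1.symm)

/-- Induction on `i`: `ξ_{i+1} x = S (ξ₁ ξ_i x)`, and `D²` passes through both `S` and `ξ₁`. -/
lemma D_D_X {d : Ralg k h →ₗ[Polynomial k] Ralg k h}
    (hd : ∀ w : List (Fin (h - 2)), d (word k h w) = dWord k h w)
    {D : Ralg k h × Ralg k h →ₗ[Polynomial k] Ralg k h × Ralg k h}
    (hD : ∀ f g : Ralg k h, D (f, g) = (d f + muElt k h * g, -d g))
    (hh : 3 ≤ h) {x : Ralg k h} (hx : d (d x) = 0) {i : ℕ} (hi : i ≤ h - 2) :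
    D (D (X k h i x)) = 0 := by
  have h0 : 0 < h - 2 := by omega
  induction i with
  | zero => simp [X_lt h0, hD, d_gen_mul hd h0, quad, hx]
  | succ i ih =>
    have ih := ih (by omega)
    have hd2 : d (d (gen k h i * x)) = 0 := by
      simpa [X_lt (show i < h - 2 by omega), hD] using ih
    have := S_D_D hd hD hh (gen k h 0 * (gen k h i * x), 0)
    rw [S_gen_zero_mul (by omega)] at this
    rw [this]
    simp [hD, d_gen_mul hd h0 (gen k h i * x), d_gen_mul hd h0 (d (gen k h i * x)), quad, hd2]

/-- `d² = 0`, by induction on words, since `d` is the restriction of `D` to the first summand. -/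
lemma d_d {d : Ralg k h →ₗ[Polynomial k] Ralg k h}
    (hd : ∀ w : List (Fin (h - 2)), d (word k h w) = dWord k h w)
    {D : Ralg k h × Ralg k h →ₗ[Polynomial k] Ralg k h × Ralg k h}
    (hD : ∀ f g : Ralg k h, D (f, g) = (d f + muElt k h * g, -d g))
    (hh : 3 ≤ h) (x : Ralg k h) : d (d x) = 0 := by
  have : d ∘ₗ d = 0 := word_ext fun w => by
    induction w with
    | nil => simp [word_nil, d_one hd]
    | cons a w ih => simpa [X_lt a.isLt, hD, word_cons] using D_D_X hd hD hh ih a.isLt.le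
  exact LinearMap.congr_fun this x

lemma D_D {d : Ralg k h →ₗ[Polynomial k] Ralg k h}
    (hd : ∀ w : List (Fin (h - 2)), d (word k h w) = dWord k h w)
    {D : Ralg k h × Ralg k h →ₗ[Polynomial k] Ralg k h × Ralg k h}
    (hD : ∀ f g : Ralg k h, D (f, g) = (d f + muElt k h * g, -d g))
    (hh : 3 ≤ h) (v : Ralg k h × Ralg k h) : D (D v) = 0 := by
  have hv : v = (v.1, 0) + X k h (h - 2) v.2 := by simp [X_top]
  rw [hv, map_add, map_add, D_D_X hd hD hh (d_d hd hD hh _) le_rfl]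
  simp [hD, d_d hd hD hh]

end

/-- with `V = R′ ⊕ R′` and `D(f, g) = (d f + μ g, −d g)`, we have
`ker D = im D ⊕ (P·(1,0) ⊕ P·(ξ₁,0))` as an internal direct sum, where
`(1,0)` and `(ξ₁,0)` are `P`-linearly independent; hence `H_*(Q) ≅ k[τ] ⊗ Λ(ξ)`. -/
theorem kerD_eq_rangeD_sup_span (k : Type*) [Field k] (h : ℕ) (hh : 3 ≤ h)
    (d : Ralg k h →ₗ[Polynomial k] Ralg k h)
    (hd : ∀ w : List (Fin (h - 2)), d (word k h w) = dWord k h w)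
    (D : Ralg k h × Ralg k h →ₗ[Polynomial k] Ralg k h × Ralg k h)
    (hD : ∀ f g : Ralg k h, D (f, g) = (d f + muElt k h * g, -d g)) :
    LinearMap.ker D = LinearMap.range D ⊔
      Submodule.span (Polynomial k)
        {((1 : Ralg k h), (0 : Ralg k h)),
         (FreeAlgebra.ι (Polynomial k) (⟨0, by omega⟩ : Fin (h - 2)), 0)} ∧
    Disjoint (LinearMap.range D)
      (Submodule.span (Polynomial k)
        {((1 : Ralg k h), (0 : Ralg k h)),
         (FreeAlgebra.ι (Polynomial k) (⟨0, by omega⟩ : Fin (h - 2)), 0)}) ∧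
    LinearIndependent (Polynomial k)
      ![((1 : Ralg k h), (0 : Ralg k h)),
        (FreeAlgebra.ι (Polynomial k) (⟨0, by omega⟩ : Fin (h - 2)), 0)] := by
  have hgen : FreeAlgebra.ι (Polynomial k) (⟨0, by omega⟩ : Fin (h - 2)) = gen k h 0 := by
    simp [gen, show 0 < h - 2 by omega]
  rw [hgen]
  -- The coefficients of `1` and `ξ₁` vanish on an element of the span only if it is zero.
  have hcoef : ∀ a b : Polynomial k, coef k h (a • 1 + b • gen k h 0) = 0 → a = 0 ∧ b = 0 := by
    intro a b hab
    have h1 := congrArg TrivSqZeroExt.fst hab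
    have h2 := congrArg TrivSqZeroExt.snd hab
    simp [coef_gen_zero hh] at h1 h2
    exact ⟨h1, h2⟩
  refine ⟨le_antisymm ?_ (sup_le ?_ ?_), ?_, ?_⟩
  · intro v hv
    have hv : D v = 0 := hv
    have H := homotopy hd hD hh v
    rw [hv, Prod.fst_zero, map_zero, zero_add, eq_sub_iff_add_eq] at H
    rw [← H]
    refine Submodule.add_mem_sup ⟨_, rfl⟩ (Submodule.mem_span_pair.2 ?_)
    exact ⟨(coef k h v.1).fst, (coef k h v.1).snd, by simp [proj_apply]⟩
  · rintro _ ⟨v, rfl⟩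
    exact D_D hd hD hh v
  · rw [Submodule.span_le]
    rintro _ (rfl | rfl)
    · simp [hD, d_one hd]
    · simp [hD, d_gen_zero hd hh]
  · rw [Submodule.disjoint_def]
    rintro _ ⟨u, rfl⟩ hu
    obtain ⟨a, b, hab⟩ := Submodule.mem_span_pair.1 hu
    have hc := coef_D hd hD hh u
    rw [← hab] at hc ⊢
    obtain ⟨rfl, rfl⟩ := hcoef a b (by simpa using hc)
    simp
  · rw [LinearIndependent.pair_iff]
    intro a b hab
    apply hcoef
    have := congrArg Prod.fst hab
    simp only [Prod.smul_mk, Prod.mk_add_mk, Prod.fst_zero] at this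
    rw [this, map_zero]
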